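/- Fix an integer k ≥ 2 and a real t ∈ [0,1). For every φ ∈ ℝ and every n ≥ 0, the function g_n(φ) = B̃_{φ,t,k}^n(φ) satisfies g_n(φ + 2π) = g_n(φ) + 2π·(k^{n+1} − 1)/(k − 1), and consequently for every φ_0 ∈ ℝ the number of solutions φ ∈ (φ_0, φ_0 + 2π] of g_n(φ) ∈ π + 2πℤ is exactly (k^{n+1} − 1)/(k − 1). Similarly, for n ≥ 1 the function ĝ_n(φ) = B̃_{φ,t,k+1}(B̃_{φ,t,k}^{n−1}(φ)) satisfies ĝ_n(φ + 2π) = ĝ_n(φ) + 2π·((k+1)·k^n − 2)/(k − 1). -/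

import Mathlib

/-- The lift of the Blaschke product `B_{e^{iφ},t,k}` to `ℝ`:
`B̃_{φ,t,k}(θ) = k·θ − 2k·arctan(t·sin θ/(1 + t·cos θ)) + φ`. -/
noncomputable def Blift (φ t : ℝ) (k : ℕ) (θ : ℝ) : ℝ :=
  (k : ℝ) * θ - 2 * (k : ℝ) * Real.arctan (t * Real.sin θ / (1 + t * Real.cos θ)) + φ

lemma den_pos (t : ℝ) (ht0 : 0 ≤ t) (ht1 : t < 1) (θ : ℝ) : 0 < 1 + t * Real.cos θ := by
  nlinarith [Real.neg_one_le_cos θ]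

lemma Blift_cont (t : ℝ) (k : ℕ) (ht0 : 0 ≤ t) (ht1 : t < 1) :
    Continuous (fun θ : ℝ => Real.arctan (t * Real.sin θ / (1 + t * Real.cos θ))) := by
  apply Real.continuous_arctan.comp
  apply Continuous.div (by fun_prop) (by fun_prop)
  intro θ
  exact (den_pos t ht0 ht1 θ).ne'

lemma base_mono (t : ℝ) (ht0 : 0 ≤ t) (ht1 : t < 1) :
    StrictMono (fun θ : ℝ => θ - 2 * Real.arctan (t * Real.sin θ / (1 + t * Real.cos θ))) := by
  apply strictMono_of_hasDerivAt_pos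
    (f' := fun θ => (1 - t ^ 2) / (1 + 2 * t * Real.cos θ + t ^ 2))
  · intro θ
    have hd := den_pos t ht0 ht1 θ
    have h1 : HasDerivAt (fun θ => t * Real.sin θ) (t * Real.cos θ) θ :=
      (Real.hasDerivAt_sin θ).const_mul t
    have h2 : HasDerivAt (fun θ => 1 + t * Real.cos θ) (t * -Real.sin θ) θ :=
      ((Real.hasDerivAt_cos θ).const_mul t).const_add 1
    have h3 := (hasDerivAt_id θ).sub (((h1.div h2 hd.ne').arctan).const_mul 2)
    refine h3.congr_deriv ?_
    have hs := Real.sin_sq_add_cos_sq θ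
    simp only [Pi.div_apply]
    set c := Real.cos θ
    set s := Real.sin θ
    have hs' : s ^ 2 = 1 - c ^ 2 := by linarith
    have hq : 0 < 1 + 2 * t * c + t ^ 2 := by
      nlinarith [sq_nonneg (1 + t * c), sq_nonneg (t * s), pow_pos hd 2]
    have e1 : 1 + (t * s / (1 + t * c)) ^ 2 = (1 + 2 * t * c + t ^ 2) / (1 + t * c) ^ 2 := by
      field_simp
      rw [hs']; ring
    have e2 : (t * c * (1 + t * c) - t * s * (t * -s)) = t * c + t ^ 2 := by
      linear_combination t ^ 2 * hs
    rw [e1, e2]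
    field_simp
    ring
  · intro θ
    have hs := Real.sin_sq_add_cos_sq θ
    have hd := den_pos t ht0 ht1 θ
    have hq : 0 < 1 + 2 * t * Real.cos θ + t ^ 2 := by
      nlinarith [sq_nonneg (t * Real.sin θ), pow_pos hd 2]
    exact div_pos (by nlinarith) hq

lemma g_mono (k : ℕ) (hk : 2 ≤ k) (t : ℝ) (ht0 : 0 ≤ t) (ht1 : t < 1) (n : ℕ) :
    StrictMono (fun φ : ℝ => (Blift φ t k)^[n] φ) := by
  induction n with
  | zero => exact strictMono_id
  | succ n ih =>
    intro a b hab
    have h1 := base_mono t ht0 ht1 (ih hab)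
    simp only [Function.iterate_succ_apply']
    unfold Blift at h1 ⊢
    have hk' : (0 : ℝ) < k := by positivity
    simp only at h1
    nlinarith [mul_lt_mul_of_pos_left h1 hk']

lemma g_cont (k : ℕ) (t : ℝ) (ht0 : 0 ≤ t) (ht1 : t < 1) (n : ℕ) :
    Continuous (fun φ : ℝ => (Blift φ t k)^[n] φ) := by
  induction n with
  | zero => exact continuous_id
  | succ n ih =>
    simp only [Function.iterate_succ_apply']
    have h := (Blift_cont t k ht0 ht1).comp ih
    have e : (fun φ : ℝ => Blift φ t k ((Blift φ t k)^[n] φ)) = fun φ : ℝ =>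
      (k : ℝ) * ((Blift φ t k)^[n] φ) - 2 * (k : ℝ) *
        ((fun θ : ℝ => Real.arctan (t * Real.sin θ / (1 + t * Real.cos θ))) ∘
          fun φ : ℝ => (Blift φ t k)^[n] φ) φ + φ := by
      funext φ
      rfl
    rw [e]
    exact ((continuous_const.mul ih).sub (continuous_const.mul h)).add continuous_id

lemma Blift_shift (φ t : ℝ) (k N : ℕ) (θ : ℝ) :
    Blift (φ + 2 * Real.pi) t k (θ + 2 * Real.pi * N) =
      Blift φ t k θ + 2 * Real.pi * (k * N + 1 : ℕ) := by
  unfold Blift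
  have : θ + 2 * Real.pi * N = θ + N * (2 * Real.pi) := by ring
  rw [this, Real.sin_add_nat_mul_two_pi, Real.cos_add_nat_mul_two_pi]
  push_cast
  ring

lemma g_shift (φ t : ℝ) (k n : ℕ) :
    (Blift (φ + 2 * Real.pi) t k)^[n] (φ + 2 * Real.pi) =
      (Blift φ t k)^[n] φ + 2 * Real.pi * (∑ i ∈ Finset.range (n + 1), k ^ i : ℕ) := by
  induction n with
  | zero => simp
  | succ n ih =>
    rw [Function.iterate_succ_apply', Function.iterate_succ_apply', ih, Blift_shift,
      Finset.sum_range_succ' _ (n + 1), Finset.mul_sum]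
    simp only [pow_succ', pow_zero]

lemma N_cast (k : ℕ) (hk : 2 ≤ k) (n : ℕ) :
    ((∑ i ∈ Finset.range (n + 1), k ^ i : ℕ) : ℝ) = ((k : ℝ) ^ (n + 1) - 1) / ((k : ℝ) - 1) := by
  have hk' : (2 : ℝ) ≤ k := by exact_mod_cast hk
  push_cast
  exact geom_sum_eq (by linarith) _

lemma count (g : ℝ → ℝ) (hm : StrictMono g) (hc : Continuous g) (N : ℕ) (a b : ℝ) (hab : a ≤ b)
    (hN : g b = g a + 2 * Real.pi * N) :
    ({φ ∈ Set.Ioc a b | ∃ m : ℤ, g φ = Real.pi + 2 * Real.pi * m}).ncard = N := by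
  have hpi := Real.pi_pos
  have hinj : Function.Injective (fun m : ℤ => Real.pi + 2 * Real.pi * (m : ℝ)) := by
    intro x y hxy
    have : 2 * Real.pi * (x : ℝ) = 2 * Real.pi * y := by simpa using hxy
    exact_mod_cast mul_left_cancel₀ (by positivity) this
  set x := (g a - Real.pi) / (2 * Real.pi) with hx
  have hxa : g a = Real.pi + 2 * Real.pi * x := by rw [hx]; field_simp; ring
  have key : g '' {φ ∈ Set.Ioc a b | ∃ m : ℤ, g φ = Real.pi + 2 * Real.pi * m} =
      (fun m : ℤ => Real.pi + 2 * Real.pi * (m : ℝ)) '' (Finset.Ioc ⌊x⌋ (⌊x⌋ + N) : Finset ℤ) := by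
    have hiff : ∀ m : ℤ, m ∈ Finset.Ioc ⌊x⌋ (⌊x⌋ + (N : ℤ)) ↔
        g a < Real.pi + 2 * Real.pi * m ∧ Real.pi + 2 * Real.pi * m ≤ g b := by
      intro m
      rw [Finset.mem_Ioc, Int.floor_lt, ← Int.floor_add_natCast, Int.le_floor, hN, hxa]
      have h2 : (0 : ℝ) < 2 * Real.pi := by positivity
      constructor
      · rintro ⟨h, h'⟩
        exact ⟨by nlinarith, by nlinarith⟩
      · rintro ⟨h, h'⟩
        exact ⟨by nlinarith, by nlinarith⟩
    ext y
    constructor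
    · rintro ⟨φ, ⟨⟨h1, h2⟩, m, h3⟩, rfl⟩
      refine ⟨m, ?_, h3.symm⟩
      rw [Finset.mem_coe, hiff, ← h3]
      exact ⟨hm h1, hm.monotone h2⟩
    · rintro ⟨m, h, rfl⟩
      rw [Finset.mem_coe, hiff] at h
      obtain ⟨φ, h1, h2⟩ := intermediate_value_Ioc hab hc.continuousOn h
      exact ⟨φ, ⟨h1, m, h2⟩, h2⟩
  rw [← Set.ncard_image_of_injective _ hm.injective, key, Set.ncard_image_of_injective _ hinj,
    Set.ncard_coe_finset, Int.card_Ioc]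
  simp

theorem stmt19 (k : ℕ) (hk : 2 ≤ k) (t : ℝ) (ht0 : 0 ≤ t) (ht1 : t < 1) :
    (∀ n : ℕ, ∀ φ : ℝ,
      (Blift (φ + 2 * Real.pi) t k)^[n] (φ + 2 * Real.pi) =
        (Blift φ t k)^[n] φ + 2 * Real.pi * (((k : ℝ) ^ (n + 1) - 1) / ((k : ℝ) - 1))) ∧
    (∀ n : ℕ, ∀ φ0 : ℝ,
      ({φ ∈ Set.Ioc φ0 (φ0 + 2 * Real.pi) | ∃ m : ℤ,
          (Blift φ t k)^[n] φ = Real.pi + 2 * Real.pi * m}).ncard =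
        (k ^ (n + 1) - 1) / (k - 1)) ∧
    (∀ n : ℕ, 1 ≤ n → ∀ φ : ℝ,
      Blift (φ + 2 * Real.pi) t (k + 1) ((Blift (φ + 2 * Real.pi) t k)^[n - 1] (φ + 2 * Real.pi)) =
        Blift φ t (k + 1) ((Blift φ t k)^[n - 1] φ) +
          2 * Real.pi * ((((k : ℝ) + 1) * (k : ℝ) ^ n - 2) / ((k : ℝ) - 1))) := by
  refine ⟨?_, ?_, ?_⟩
  · intro n φ
    rw [g_shift, N_cast k hk]
  · intro n φ0
    rw [← Nat.geomSum_eq hk]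
    exact count _ (g_mono k hk t ht0 ht1 n) (g_cont k t ht0 ht1 n) _ _ _
      (by linarith [Real.pi_pos]) (g_shift φ0 t k n)
  · intro n hn φ
    obtain ⟨n, rfl⟩ : ∃ m, n = m + 1 := ⟨n - 1, by omega⟩
    rw [Nat.add_sub_cancel, g_shift, Blift_shift, Nat.cast_add, Nat.cast_mul, N_cast k hk]
    have hk' : (2 : ℝ) ≤ k := by exact_mod_cast hk
    have : (k : ℝ) - 1 ≠ 0 := by linarith
    push_cast
    congr 2
    field_simp
    ring
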